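/- Optimal local tester (Theorem 3.1 / Theorem thm:key, theorem-4222259): Let P = (Pyes, Pno) be a property of bipartite pure states in ℂ^d ⊗ ℂ^d that is unitarily invariant on H_B. Let 0 ≤ s < c ≤ 1 and suppose T is a (c,s)-tester for P with sample complexity N. Then there exists a matrix M indexed by (Fin N → Fin d) with 0 ⊑ M ⊑ 1 such that the local tester on H_A determined by M, namely T̂ x y = M (fun i => (x i).1) (fun i => (y i).1) * (if (fun i => (x i).2) = (fun i => (y i).2) then 1 else 0), is also a (c,s)-tester for P with sample complexity N. -/

import Mathlib

open scoped ComplexConjugate ComplexOrder Kronecker Matrix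
open MeasureTheory

namespace PaperStmt

/-- The rank-one matrix `ψψ†` associated with a vector `ψ`. -/
noncomputable def outer {ι : Type*} (ψ : ι → ℂ) : Matrix ι ι ℂ :=
  Matrix.of fun x y => ψ x * conj (ψ y)

/-- The `N`-fold tensor power of a square matrix `ρ`. -/
noncomputable def tpow {ι : Type*} (ρ : Matrix ι ι ℂ) (N : ℕ) : Matrix (Fin N → ι) (Fin N → ι) ℂ :=
  Matrix.of fun x y => ∏ i, ρ (x i) (y i)

/-- `ψ` is a unit vector (for the ℓ² norm). -/
def IsUnitVec {ι : Type*} [Fintype ι] (ψ : ι → ℂ) : Prop :=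
  ∑ x, Complex.normSq (ψ x) = 1

/-- `0 ⊑ T ⊑ 1` in the Loewner order. -/
def IsTester {κ : Type*} [Fintype κ] [DecidableEq κ] (T : Matrix κ κ ℂ) : Prop :=
  T.PosSemidef ∧ ((1 : Matrix κ κ ℂ) - T).PosSemidef

/-- `ρ` is a density matrix: positive semidefinite with unit trace. -/
def IsDensity {ι : Type*} [Fintype ι] (ρ : Matrix ι ι ℂ) : Prop :=
  ρ.PosSemidef ∧ ρ.trace = 1

/-- The acceptance probability `tr (T · ρ^{⊗N})` of a tester `T` on `N` samples of `ρ`. -/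
noncomputable def acc {ι : Type*} [Fintype ι] {N : ℕ}
    (T : Matrix (Fin N → ι) (Fin N → ι) ℂ) (ρ : Matrix ι ι ℂ) : ℝ :=
  ((T * tpow ρ N).trace).re

/-- The trace distance `½ ∑ᵢ |λᵢ(ρ - σ)|` between (Hermitian) matrices. -/
noncomputable def traceDist {κ : Type*} [Fintype κ] [DecidableEq κ]
    (ρ σ : Matrix κ κ ℂ) : ℝ :=
  if h : (ρ - σ).IsHermitian then (1 / 2) * ∑ i, |h.eigenvalues i| else 0

/-- The local tester on `H_A` determined by a matrix `M` acting on Alice's registers. -/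
noncomputable def localA {d N : ℕ} (M : Matrix (Fin N → Fin d) (Fin N → Fin d) ℂ) :
    Matrix (Fin N → Fin d × Fin d) (Fin N → Fin d × Fin d) ℂ :=
  Matrix.of fun x y =>
    M (fun i => (x i).1) (fun i => (y i).1) *
      (if (fun i => (x i).2) = (fun i => (y i).2) then 1 else 0)

/-- The vector `(I ⊗ U) ψ` : the unitary `U` applied to the `B` part of `ψ`. -/
noncomputable def applyB {d : ℕ} (U : Matrix (Fin d) (Fin d) ℂ) (ψ : Fin d × Fin d → ℂ) :
    Fin d × Fin d → ℂ :=
  fun p => ∑ k, U p.2 k * ψ (p.1, k)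

/-- The partial trace over the second (`B`) tensor factor. -/
noncomputable def ptraceB {d : ℕ} (M : Matrix (Fin d × Fin d) (Fin d × Fin d) ℂ) :
    Matrix (Fin d) (Fin d) ℂ :=
  Matrix.of fun a b => ∑ j, M (a, j) (b, j)

/-!
Let `G = ∫ |U^{⊗N}⟩⟩⟨⟨U^{⊗N}| dU` be the Choi matrix of the twirl by Haar-random unitaries on `H_B`,
and let `M = Tr_B (√G T √G)`. Then `0 ⊑ M ⊑ 1` because `Tr_B G = 1`.

By invariance of the Haar measure, `G` commutes with `V^{⊗N} ⊗ 1` for every unitary `V`. Since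
`U(d)` is Zariski dense in the space of all matrices (a polynomial vanishing on it vanishes on
`U D V` for every diagonal `D`, hence on Hermitian matrices, hence on `A + i B` by interpolation
along `A + t B`), `G` and `√G` commute with `X^{⊗N} ⊗ 1` for every matrix `X`. Writing
`ψ = (Ψᵀ ⊗ 1) |1⟩⟩`, one can therefore move both copies of `√G` next to each other in
`tr ((M ⊗ 1) (ψψ†)^{⊗N})`, which becomes the average over `U` of the acceptance probability of `T`
on `(I ⊗ U) ψ`.
-/

theorem posSemidef_outer {ι : Type*} [Finite ι] (ψ : ι → ℂ) : (outer ψ).PosSemidef :=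
  Matrix.posSemidef_vecMulVec_self_star ψ

theorem outer_mulVec {ι κ : Type*} [Fintype ι] (K : Matrix κ ι ℂ) (ψ : ι → ℂ) :
    outer (K *ᵥ ψ) = K * outer ψ * Kᴴ := by
  change Matrix.vecMulVec (K *ᵥ ψ) (star (K *ᵥ ψ)) = K * Matrix.vecMulVec ψ (star ψ) * Kᴴ
  rw [Matrix.mul_vecMulVec, Matrix.vecMulVec_mul, Matrix.star_mulVec]

theorem continuous_outer {ι : Type*} : Continuous (outer : (ι → ℂ) → Matrix ι ι ℂ) := by
  unfold outer
  fun_prop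

section TensorPower

variable {ι : Type*} {N : ℕ}

theorem tpow_mul [Fintype ι] (X Y : Matrix ι ι ℂ) : tpow (X * Y) N = tpow X N * tpow Y N := by
  ext a b
  simp only [tpow, Matrix.of_apply, Matrix.mul_apply, ← Finset.prod_mul_distrib]
  rw [Finset.prod_univ_sum, Fintype.piFinset_univ]

theorem tpow_one [DecidableEq ι] : tpow (1 : Matrix ι ι ℂ) N = 1 := by
  ext a b
  simp [tpow, Matrix.one_apply, Finset.prod_ite_zero, funext_iff]

theorem tpow_conjTranspose (X : Matrix ι ι ℂ) : tpow Xᴴ N = (tpow X N)ᴴ := by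
  ext a b
  simp [tpow]

theorem tpow_transpose (X : Matrix ι ι ℂ) : tpow Xᵀ N = (tpow X N)ᵀ := rfl

theorem tpow_mem_unitaryGroup [Fintype ι] [DecidableEq ι] {U : Matrix ι ι ℂ}
    (hU : U ∈ Matrix.unitaryGroup ι ℂ) : tpow U N ∈ Matrix.unitaryGroup (Fin N → ι) ℂ := by
  rw [Matrix.mem_unitaryGroup_iff, Matrix.star_eq_conjTranspose, ← tpow_conjTranspose, ← tpow_mul,
    ← Matrix.star_eq_conjTranspose, Matrix.mem_unitaryGroup_iff.1 hU, tpow_one]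

theorem continuous_tpow : Continuous fun X : Matrix ι ι ℂ => tpow X N := by
  unfold tpow
  fun_prop

theorem continuous_outer_vec_tpow : Continuous fun X : Matrix ι ι ℂ => outer (tpow X N).vec := by
  have := continuous_tpow (ι := ι) (N := N)
  exact continuous_outer.comp (by unfold Matrix.vec; fun_prop)

theorem tpow_outer (ψ : ι → ℂ) : tpow (outer ψ) N = outer fun x => ∏ i, ψ (x i) := by
  ext x y
  simp [tpow, outer, Finset.prod_mul_distrib]

end TensorPower

section UnitaryDensity

theorem exists_mvPolynomial_eval_eq_dual_tpow {n : Type*} [Finite n] {N : ℕ}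
    (φ : Module.Dual ℂ (Matrix (Fin N → n) (Fin N → n) ℂ)) :
    ∃ p : MvPolynomial (n × n) ℂ, ∀ X : Matrix n n ℂ,
      p.eval (fun x => X x.1 x.2) = φ (tpow X N) := by
  classical
  have := Fintype.ofFinite n
  refine ⟨∑ a, ∑ b, MvPolynomial.C (φ (Matrix.single a b 1)) * ∏ i, MvPolynomial.X (a i, b i),
    fun X => ?_⟩
  conv_rhs => rw [Matrix.matrix_eq_sum_single (tpow X N)]
  have single_eq (a b : Fin N → n) (z : ℂ) : Matrix.single a b z = z • Matrix.single a b 1 := by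
    simp
  simp only [map_sum, map_mul, MvPolynomial.eval_C, map_prod, MvPolynomial.eval_X]
  refine Finset.sum_congr rfl fun a _ => Finset.sum_congr rfl fun b _ => ?_
  rw [single_eq a b (tpow X N a b), map_smul, smul_eq_mul, mul_comm]
  rfl

variable {n : Type*} [Fintype n] [DecidableEq n] {p : MvPolynomial (n × n) ℂ}

theorem diagonal_mem_unitaryGroup {x : n → ℂ} (hx : ∀ i, ‖x i‖ = 1) :
    Matrix.diagonal x ∈ Matrix.unitaryGroup n ℂ := by
  rw [Matrix.mem_unitaryGroup_iff, Matrix.star_eq_conjTranspose, Matrix.diagonal_conjTranspose,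
    Matrix.diagonal_mul_diagonal, ← Matrix.diagonal_one]
  congr 1
  ext i
  simp [Complex.mul_conj, Complex.normSq_eq_norm_sq, hx i]

theorem eval_mul_diagonal_mul_eq_zero
    (hp : ∀ U ∈ Matrix.unitaryGroup n ℂ, p.eval (fun x => U x.1 x.2) = 0)
    {U V : Matrix n n ℂ} (hU : U ∈ Matrix.unitaryGroup n ℂ) (hV : V ∈ Matrix.unitaryGroup n ℂ)
    (D : n → ℂ) : p.eval (fun x => (U * Matrix.diagonal D * V) x.1 x.2) = 0 := by
  let q : MvPolynomial n ℂ :=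
    p.bind₁ fun x => ∑ k, MvPolynomial.C (U x.1 k) * MvPolynomial.X k * MvPolynomial.C (V k x.2)
  have eval_q (z : n → ℂ) :
      q.eval z = p.eval (fun x => (U * Matrix.diagonal z * V) x.1 x.2) := by
    rw [← MvPolynomial.aeval_eq_eval, MvPolynomial.aeval_bind₁, MvPolynomial.aeval_eq_eval]
    congr 2
    ext x
    rw [Matrix.mul_apply]
    simp [Matrix.mul_diagonal]
  have circle_infinite : (Metric.sphere (0 : ℂ) 1).Infinite :=
    (isPreconnected_sphere (by simp [Complex.rank_real_complex]) 0 1).infinite_of_nontrivial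
      ⟨1, by simp, -1, by simp, by norm_num⟩
  have q_eq_zero : q = 0 := by
    refine MvPolynomial.funext_set (fun _ => Metric.sphere 0 1) (fun _ => circle_infinite) ?_
    intro z hz
    have hz' : Matrix.diagonal z ∈ Matrix.unitaryGroup n ℂ :=
      diagonal_mem_unitaryGroup fun i => by simpa using hz i (Set.mem_univ i)
    rw [eval_q, hp _ (mul_mem (mul_mem hU hz') hV), map_zero]
  rw [← eval_q, q_eq_zero, map_zero]

theorem eval_eq_zero_of_isHermitian
    (hp : ∀ U ∈ Matrix.unitaryGroup n ℂ, p.eval (fun x => U x.1 x.2) = 0)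
    {H : Matrix n n ℂ} (hH : H.IsHermitian) : p.eval (fun x => H x.1 x.2) = 0 := by
  rw [hH.spectral_theorem, Unitary.conjStarAlgAut_apply]
  exact eval_mul_diagonal_mul_eq_zero hp hH.eigenvectorUnitary.2 (star hH.eigenvectorUnitary).2 _

theorem eq_zero_of_eval_unitaryGroup_eq_zero
    (hp : ∀ U ∈ Matrix.unitaryGroup n ℂ, p.eval (fun x => U x.1 x.2) = 0) : p = 0 := by
  refine MvPolynomial.funext fun x => ?_
  let X : Matrix n n ℂ := Matrix.of fun i j => x (i, j)
  let A : Matrix n n ℂ := realPart X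
  let B : Matrix n n ℂ := imaginaryPart X
  let q : Polynomial ℂ :=
    p.aeval fun x => Polynomial.C (A x.1 x.2) + Polynomial.X * Polynomial.C (B x.1 x.2)
  have eval_q (t : ℂ) : q.eval t = p.eval fun x => (A + t • B) x.1 x.2 := by
    rw [← Polynomial.coe_aeval_eq_eval, MvPolynomial.comp_aeval_apply,
      MvPolynomial.aeval_eq_eval]
    congr 2
    ext x
    simp [mul_comm t]
  have q_eq_zero : q = 0 := by
    refine Polynomial.eq_zero_of_infinite_isRoot q ?_
    refine Set.infinite_of_injective_forall_mem (f := fun k : ℕ => (k : ℂ)) Nat.cast_injective ?_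
    intro k
    have herm : (A + (k : ℂ) • B).IsHermitian :=
      (realPart X).2.add ((IsSelfAdjoint.natCast k).smul (imaginaryPart X).2)
    exact (eval_q k).trans (eval_eq_zero_of_isHermitian hp herm)
  have hX : A + Complex.I • B = X := realPart_add_I_smul_imaginaryPart X
  have := eval_q Complex.I
  rw [hX, q_eq_zero] at this
  simpa [X] using this.symm

theorem linearMap_tpow_eq_zero_of_unitaryGroup {N : ℕ} {E : Type*} [AddCommGroup E] [Module ℂ E]
    (f : Matrix (Fin N → n) (Fin N → n) ℂ →ₗ[ℂ] E)
    (hf : ∀ U ∈ Matrix.unitaryGroup n ℂ, f (tpow U N) = 0) (X : Matrix n n ℂ) :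
    f (tpow X N) = 0 := by
  refine (Module.forall_dual_apply_eq_zero_iff ℂ _).1 fun φ => ?_
  obtain ⟨p, hp⟩ := exists_mvPolynomial_eval_eq_dual_tpow (φ ∘ₗ f)
  have p_eq_zero : p = 0 :=
    eq_zero_of_eval_unitaryGroup_eq_zero fun U hU => by simp [hp, hf U hU]
  simpa [p_eq_zero] using (hp X).symm

end UnitaryDensity

section CompactGroup

theorem map_integral_of_continuous {G E F : Type*} [TopologicalSpace G] [CompactSpace G]
    [MeasurableSpace G] [OpensMeasurableSpace G] {μ : Measure G} [IsFiniteMeasureOnCompacts μ]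
    [NormedAddCommGroup E] [NormedSpace ℂ E] [FiniteDimensional ℂ E]
    [NormedAddCommGroup F] [NormedSpace ℂ F] [CompleteSpace F]
    (L : E →ₗ[ℂ] F) {f : G → E} (hf : Continuous f) :
    L (∫ x, f x ∂μ) = ∫ x, L (f x) ∂μ :=
  have := FiniteDimensional.complete ℂ E
  (L.toContinuousLinearMap.integral_comp_comm
    (hf.integrable_of_hasCompactSupport (.of_compactSpace f))).symm

theorem isMulRightInvariant_of_isProbabilityMeasure {G : Type*} [TopologicalSpace G] [Group G]
    [IsTopologicalGroup G] [LocallyCompactSpace G] [MeasurableSpace G] [BorelSpace G]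
    (μ : Measure G) [μ.IsHaarMeasure] [IsProbabilityMeasure μ] : μ.IsMulRightInvariant where
  map_mul_right_eq_self g :=
    have : IsProbabilityMeasure (μ.map (· * g)) :=
      Measure.isProbabilityMeasure_map (by fun_prop)
    Measure.isHaarMeasure_eq_of_isProbabilityMeasure _ _

theorem compactSpace_unitary {A : Type*} [CStarAlgebra A] [FiniteDimensional ℂ A] :
    CompactSpace (unitary A) := by
  have := FiniteDimensional.proper ℂ A
  refine isCompact_iff_compactSpace.1 <|
    (isCompact_closedBall (0 : A) 1).of_isClosed_subset isClosed_unitary fun U hU => ?_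
  nontriviality A
  simp [CStarRing.norm_of_mem_unitary hU]

end CompactGroup

section HaarUnitary

variable {n : Type*} [Fintype n] [DecidableEq n]

instance : CompactSpace (Matrix.unitaryGroup n ℂ) :=
  open scoped Matrix.Norms.L2Operator in compactSpace_unitary (A := Matrix n n ℂ)

noncomputable instance : MeasurableSpace (Matrix.unitaryGroup n ℂ) := borel _

instance : BorelSpace (Matrix.unitaryGroup n ℂ) := ⟨rfl⟩

/-- The Haar probability measure on the unitary group, for the Borel `σ`-algebra. -/
noncomputable def haarUnitary (n : Type*) [Fintype n] [DecidableEq n] :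
    Measure (Matrix.unitaryGroup n ℂ) :=
  Measure.haarMeasure ⊤

instance : (haarUnitary n).IsHaarMeasure :=
  inferInstanceAs (Measure.haarMeasure ⊤).IsHaarMeasure

instance : IsProbabilityMeasure (haarUnitary n) :=
  ⟨Measure.haarMeasure_self (K₀ := ⊤)⟩

instance : (haarUnitary n).IsMulRightInvariant :=
  isMulRightInvariant_of_isProbabilityMeasure _

end HaarUnitary

section Twirl

open scoped MatrixOrder Matrix.Norms.L2Operator

variable {n : Type*} [Fintype n] [DecidableEq n] {N : ℕ}

/-- The Choi matrix `∫ |U^{⊗N}⟩⟩⟨⟨U^{⊗N}| dU` of the twirling channel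
`X ↦ ∫ U^{⊗N} X (U^{⊗N})ᴴ dU`. The first tensor factor is the input of the channel. -/
noncomputable def twirlChoi (n : Type*) [Fintype n] [DecidableEq n] (N : ℕ) :
    Matrix ((Fin N → n) × (Fin N → n)) ((Fin N → n) × (Fin N → n)) ℂ :=
  ∫ U : Matrix.unitaryGroup n ℂ, outer (tpow (U : Matrix n n ℂ) N).vec ∂haarUnitary n

theorem linearMap_twirlChoi {E : Type*} [NormedAddCommGroup E] [NormedSpace ℂ E] [CompleteSpace E]
    (L : Matrix ((Fin N → n) × (Fin N → n)) ((Fin N → n) × (Fin N → n)) ℂ →ₗ[ℂ] E) :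
    L (twirlChoi n N) =
      ∫ U : Matrix.unitaryGroup n ℂ, L (outer (tpow (U : Matrix n n ℂ) N).vec) ∂haarUnitary n :=
  map_integral_of_continuous L (continuous_outer_vec_tpow.comp continuous_subtype_val)

theorem posSemidef_twirlChoi : (twirlChoi n N).PosSemidef :=
  Matrix.nonneg_iff_posSemidef.1 <| integral_nonneg fun _ => (posSemidef_outer _).nonneg

theorem tpow_kronecker_one_mulVec_vec (X Y : Matrix n n ℂ) :
    (tpow X N ⊗ₖ (1 : Matrix (Fin N → n) (Fin N → n) ℂ)) *ᵥ (tpow Y N).vec =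
      (tpow (Y * Xᵀ) N).vec := by
  rw [Matrix.kronecker_mulVec_vec, Matrix.one_mul, tpow_mul, tpow_transpose]

theorem kronecker_one_conj_twirlChoi {V : Matrix n n ℂ} (hV : V ∈ Matrix.unitaryGroup n ℂ) :
    (tpow V N ⊗ₖ (1 : Matrix (Fin N → n) (Fin N → n) ℂ)) * twirlChoi n N *
      (tpow V N ⊗ₖ (1 : Matrix (Fin N → n) (Fin N → n) ℂ))ᴴ = twirlChoi n N := by
  set A := tpow V N ⊗ₖ (1 : Matrix (Fin N → n) (Fin N → n) ℂ) with hA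
  let Vt : Matrix.unitaryGroup n ℂ := ⟨Vᵀ, Matrix.transpose_mem_unitaryGroup_iff.2 hV⟩
  calc A * twirlChoi n N * Aᴴ
      = ∫ U : Matrix.unitaryGroup n ℂ, A * outer (tpow (U : Matrix n n ℂ) N).vec * Aᴴ
          ∂haarUnitary n :=
        linearMap_twirlChoi (LinearMap.mulLeftRight ℂ (A, Aᴴ))
    _ = ∫ U : Matrix.unitaryGroup n ℂ,
          outer (tpow ((U * Vt : Matrix.unitaryGroup n ℂ) : Matrix n n ℂ) N).vec
          ∂haarUnitary n := by
        simp only [← outer_mulVec, hA, tpow_kronecker_one_mulVec_vec, Vt, Submonoid.coe_mul]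
    _ = twirlChoi n N :=
        integral_mul_right_eq_self
          (fun U : Matrix.unitaryGroup n ℂ => outer (tpow (U : Matrix n n ℂ) N).vec) Vt

theorem commute_twirlChoi_of_mem_unitaryGroup {V : Matrix n n ℂ}
    (hV : V ∈ Matrix.unitaryGroup n ℂ) :
    Commute (twirlChoi n N) (tpow V N ⊗ₖ (1 : Matrix (Fin N → n) (Fin N → n) ℂ)) := by
  set A := tpow V N ⊗ₖ (1 : Matrix (Fin N → n) (Fin N → n) ℂ) with hA
  have unitary_A : Aᴴ * A = 1 :=
    Matrix.mem_unitaryGroup_iff'.1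
      (Matrix.kronecker_mem_unitary (tpow_mem_unitaryGroup hV) (one_mem _))
  calc twirlChoi n N * A = A * twirlChoi n N * Aᴴ * A := by rw [kronecker_one_conj_twirlChoi hV]
    _ = A * twirlChoi n N := by rw [Matrix.mul_assoc, unitary_A, Matrix.mul_one]

theorem commute_twirlChoi (X : Matrix n n ℂ) :
    Commute (twirlChoi n N) (tpow X N ⊗ₖ (1 : Matrix (Fin N → n) (Fin N → n) ℂ)) := by
  let commutator : Matrix (Fin N → n) (Fin N → n) ℂ →ₗ[ℂ]
      Matrix ((Fin N → n) × (Fin N → n)) ((Fin N → n) × (Fin N → n)) ℂ :=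
    (LinearMap.mulLeft ℂ (twirlChoi n N) - LinearMap.mulRight ℂ (twirlChoi n N)) ∘ₗ
      (Matrix.kroneckerBilinear ..).flip 1
  exact sub_eq_zero.1 <| linearMap_tpow_eq_zero_of_unitaryGroup commutator
    (fun U hU => sub_eq_zero.2 (commute_twirlChoi_of_mem_unitaryGroup hU)) X

end Twirl

section PartialTrace

variable {α β : Type*} [Fintype β]

/-- The partial trace over the second tensor factor, as a linear map. -/
def partialTraceRight (R : Type*) [Semiring R] :
    Matrix (α × β) (α × β) R →ₗ[R] Matrix α α R where
  toFun A := ∑ j, A.submatrix (·, j) (·, j)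
  map_add' A B := by simp [Matrix.submatrix_add, Finset.sum_add_distrib]
  map_smul' r A := by simp [Matrix.submatrix_smul, Finset.smul_sum]

theorem partialTraceRight_apply {R : Type*} [Semiring R] (A : Matrix (α × β) (α × β) R) (a b : α) :
    partialTraceRight R A a b = ∑ j, A (a, j) (b, j) :=
  Matrix.sum_apply ..

theorem posSemidef_partialTraceRight {A : Matrix (α × β) (α × β) ℂ} (hA : A.PosSemidef) :
    (partialTraceRight ℂ A).PosSemidef :=
  Matrix.posSemidef_sum _ fun _ _ => hA.submatrix _

theorem partialTraceRight_outer_vec (Y : Matrix β α ℂ) :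
    partialTraceRight ℂ (outer Y.vec) = (Yᴴ * Y)ᵀ := by
  ext a b
  simp [partialTraceRight_apply, outer, Matrix.vec, Matrix.mul_apply, mul_comm]

variable [Fintype α] [DecidableEq β]

theorem trace_partialTraceRight_mul {R : Type*} [Semiring R]
    (A : Matrix (α × β) (α × β) R) (B : Matrix α α R) :
    (partialTraceRight R A * B).trace = (A * (B ⊗ₖ (1 : Matrix β β R))).trace := by
  simp only [Matrix.trace, Matrix.diag, Matrix.mul_apply, partialTraceRight_apply,
    Fintype.sum_prod_type, Matrix.kronecker_apply, Matrix.one_apply, Finset.sum_mul]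
  refine Finset.sum_congr rfl fun a _ => ?_
  rw [Finset.sum_comm]
  simp

end PartialTrace

section IsTester

variable {α β : Type*} [Fintype α] [Fintype β] [DecidableEq α] [DecidableEq β]

theorem isTester_submatrix_equiv {T : Matrix α α ℂ} (hT : IsTester T) (e : β ≃ α) :
    IsTester (T.submatrix e e) := by
  refine ⟨hT.1.submatrix e, ?_⟩
  simpa [Matrix.submatrix_sub] using hT.2.submatrix e

theorem isTester_kronecker_one {M : Matrix α α ℂ} (hM : IsTester M) :
    IsTester (M ⊗ₖ (1 : Matrix β β ℂ)) := by
  refine ⟨hM.1.kronecker .one, ?_⟩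
  have sub_kronecker : 1 - M ⊗ₖ (1 : Matrix β β ℂ) = (1 - M) ⊗ₖ (1 : Matrix β β ℂ) := by
    rw [← Matrix.one_kronecker_one]
    ext
    simp only [Matrix.sub_apply, Matrix.kroneckerMap_apply, sub_mul]
  rw [sub_kronecker]
  exact hM.2.kronecker .one

theorem isTester_partialTraceRight_conj {T K : Matrix (α × β) (α × β) ℂ} (hT : IsTester T)
    (hK : partialTraceRight ℂ (K * Kᴴ) = 1) :
    IsTester (partialTraceRight ℂ (K * T * Kᴴ)) := by
  refine ⟨posSemidef_partialTraceRight (hT.1.mul_mul_conjTranspose_same K), ?_⟩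
  have complement : 1 - partialTraceRight ℂ (K * T * Kᴴ) =
      partialTraceRight ℂ (K * (1 - T) * Kᴴ) := by
    rw [← hK, ← map_sub, Matrix.mul_sub, Matrix.sub_mul, Matrix.mul_one]
  rw [complement]
  exact posSemidef_partialTraceRight (hT.2.mul_mul_conjTranspose_same K)

end IsTester

theorem trace_conj_mul_of_commute {κ R : Type*} [Fintype κ] [CommSemiring R]
    {S A B T : Matrix κ κ R} (hA : Commute S A) (hB : Commute S B) :
    (S * T * S * (A * B)).trace = (T * (A * (S * S) * B)).trace := by
  calc (S * T * S * (A * B)).trace = (T * (S * A * (B * S))).trace := by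
        rw [Matrix.mul_assoc, Matrix.mul_assoc, Matrix.trace_mul_comm]
        simp only [Matrix.mul_assoc]
    _ = (T * (A * (S * S) * B)).trace := by
        rw [hA.eq, ← hB.eq]
        simp only [Matrix.mul_assoc]

section Localization

open scoped MatrixOrder Matrix.Norms.L2Operator

variable {n : Type*} [Fintype n] [DecidableEq n] {N : ℕ}

theorem partialTraceRight_twirlChoi : partialTraceRight ℂ (twirlChoi n N) = 1 := by
  have partialTraceRight_outer (U : Matrix.unitaryGroup n ℂ) :
      partialTraceRight ℂ (outer (tpow (U : Matrix n n ℂ) N).vec) = 1 := by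
    rw [partialTraceRight_outer_vec, ← Matrix.star_eq_conjTranspose,
      Matrix.mem_unitaryGroup_iff'.1 (tpow_mem_unitaryGroup U.2), Matrix.transpose_one]
  simp [linearMap_twirlChoi, partialTraceRight_outer]

theorem sqrt_twirlChoi_mul_self :
    CFC.sqrt (twirlChoi n N) * CFC.sqrt (twirlChoi n N) = twirlChoi n N :=
  CFC.sqrt_mul_sqrt_self _ posSemidef_twirlChoi.nonneg

theorem conjTranspose_sqrt_twirlChoi :
    (CFC.sqrt (twirlChoi n N))ᴴ = CFC.sqrt (twirlChoi n N) :=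
  (CFC.sqrt_nonneg (twirlChoi n N)).isSelfAdjoint

theorem commute_sqrt_twirlChoi (X : Matrix n n ℂ) :
    Commute (CFC.sqrt (twirlChoi n N)) (tpow X N ⊗ₖ (1 : Matrix (Fin N → n) (Fin N → n) ℂ)) := by
  rw [CFC.sqrt_eq_cfc]
  exact (commute_twirlChoi X).cfc_nnreal _

/-- The tester `Tr_B (√G T √G)` on `H_A^{⊗N}` obtained from a tester `T` on
`H_A^{⊗N} ⊗ H_B^{⊗N}`, where `G` is the Choi matrix of the twirling channel. -/
noncomputable def localizedTester
    (T : Matrix ((Fin N → n) × (Fin N → n)) ((Fin N → n) × (Fin N → n)) ℂ) :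
    Matrix (Fin N → n) (Fin N → n) ℂ :=
  partialTraceRight ℂ (CFC.sqrt (twirlChoi n N) * T * CFC.sqrt (twirlChoi n N))

variable {T : Matrix ((Fin N → n) × (Fin N → n)) ((Fin N → n) × (Fin N → n)) ℂ}

theorem isTester_localizedTester (hT : IsTester T) : IsTester (localizedTester T) := by
  have normalized : partialTraceRight ℂ
      (CFC.sqrt (twirlChoi n N) * (CFC.sqrt (twirlChoi n N))ᴴ) = 1 := by
    rw [conjTranspose_sqrt_twirlChoi, sqrt_twirlChoi_mul_self, partialTraceRight_twirlChoi]
  simpa only [localizedTester, conjTranspose_sqrt_twirlChoi] using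
    isTester_partialTraceRight_conj hT normalized

theorem trace_localizedTester_kronecker_one_mul_outer (Ψ : Matrix n n ℂ) :
    ((localizedTester T ⊗ₖ (1 : Matrix (Fin N → n) (Fin N → n) ℂ)) *
        outer (tpow Ψ N).vec).trace =
      ∫ U : Matrix.unitaryGroup n ℂ,
        (T * outer (tpow ((U : Matrix n n ℂ) * Ψ) N).vec).trace ∂haarUnitary n := by
  set S := CFC.sqrt (twirlChoi n N)
  set A := tpow Ψᵀ N ⊗ₖ (1 : Matrix (Fin N → n) (Fin N → n) ℂ) with hA
  have conjTranspose_A : Aᴴ = tpow Ψᵀᴴ N ⊗ₖ 1 := by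
    rw [hA, Matrix.conjTranspose_kronecker, Matrix.conjTranspose_one, tpow_conjTranspose]
  have reduced_state : ((tpow Ψ N)ᴴ * tpow Ψ N)ᵀ ⊗ₖ 1 = A * Aᴴ := by
    rw [conjTranspose_A, hA, ← Matrix.mul_kronecker_mul, Matrix.one_mul, ← tpow_mul,
      ← tpow_conjTranspose, ← tpow_mul, ← tpow_transpose, Matrix.transpose_mul]
    rfl
  calc ((localizedTester T ⊗ₖ 1) * outer (tpow Ψ N).vec).trace
      = (localizedTester T * ((tpow Ψ N)ᴴ * tpow Ψ N)ᵀ).trace := by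
        rw [Matrix.trace_mul_comm, ← trace_partialTraceRight_mul, partialTraceRight_outer_vec,
          Matrix.trace_mul_comm]
    _ = (S * T * S * (A * Aᴴ)).trace := by
        rw [localizedTester, trace_partialTraceRight_mul, reduced_state]
    _ = (T * (A * twirlChoi n N * Aᴴ)).trace := by
        rw [trace_conj_mul_of_commute (commute_sqrt_twirlChoi _)
          (conjTranspose_A ▸ commute_sqrt_twirlChoi _), sqrt_twirlChoi_mul_self]
    _ = ∫ U : Matrix.unitaryGroup n ℂ,
          (T * (A * outer (tpow (U : Matrix n n ℂ) N).vec * Aᴴ)).trace ∂haarUnitary n :=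
        linearMap_twirlChoi
          (Matrix.traceLinearMap _ ℂ ℂ ∘ₗ LinearMap.mulLeft ℂ T ∘ₗ LinearMap.mulLeftRight ℂ (A, Aᴴ))
    _ = ∫ U : Matrix.unitaryGroup n ℂ,
          (T * outer (tpow ((U : Matrix n n ℂ) * Ψ) N).vec).trace ∂haarUnitary n := by
        simp only [← outer_mulVec, hA, tpow_kronecker_one_mulVec_vec, Matrix.transpose_transpose]

end Localization

theorem continuous_trace_mul_outer_vec_tpow_mul {n : Type*} [Fintype n] [DecidableEq n] {N : ℕ}
    (T : Matrix ((Fin N → n) × (Fin N → n)) ((Fin N → n) × (Fin N → n)) ℂ) (Ψ : Matrix n n ℂ) :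
    Continuous fun U : Matrix.unitaryGroup n ℂ =>
      (T * outer (tpow ((U : Matrix n n ℂ) * Ψ) N).vec).trace :=
  (continuous_const.matrix_mul (continuous_outer_vec_tpow.comp (by fun_prop))).matrix_trace

section Registers

/-- The coefficient matrix `Ψ` of a bipartite vector `ψ`, with rows indexed by the second factor, so
that `ψ = vec Ψ` and `(I ⊗ U) ψ = vec (U * Ψ)`. -/
def coeffMatrix {α β : Type*} (ψ : α × β → ℂ) : Matrix β α ℂ :=
  Matrix.of fun j i => ψ (i, j)

theorem coeffMatrix_applyB {d : ℕ} (U : Matrix (Fin d) (Fin d) ℂ) (ψ : Fin d × Fin d → ℂ) :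
    coeffMatrix (applyB U ψ) = U * coeffMatrix ψ :=
  rfl

/-- The regrouping `(H_A ⊗ H_B)^{⊗N} ≃ H_A^{⊗N} ⊗ H_B^{⊗N}` of registers. -/
abbrev registerEquiv (d N : ℕ) :
    (Fin N → Fin d × Fin d) ≃ (Fin N → Fin d) × (Fin N → Fin d) :=
  Equiv.arrowProdEquivProdArrow (Fin N) (fun _ => Fin d) fun _ => Fin d

theorem trace_submatrix_equiv {α β R : Type*} [Fintype α] [Fintype β] [AddCommMonoid R]
    (A : Matrix α α R) (e : β ≃ α) : (A.submatrix e e).trace = A.trace :=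
  e.sum_comp fun a => A a a

variable {d N : ℕ}

theorem tpow_outer_submatrix_registerEquiv_symm (ψ : Fin d × Fin d → ℂ) :
    (tpow (outer ψ) N).submatrix (registerEquiv d N).symm (registerEquiv d N).symm =
      outer (tpow (coeffMatrix ψ) N).vec := by
  rw [tpow_outer]
  rfl

theorem acc_outer_eq_re_trace (T : Matrix (Fin N → Fin d × Fin d) (Fin N → Fin d × Fin d) ℂ)
    (ψ : Fin d × Fin d → ℂ) :
    acc T (outer ψ) =
      (T.submatrix (registerEquiv d N).symm (registerEquiv d N).symm *
        outer (tpow (coeffMatrix ψ) N).vec).trace.re := by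
  rw [acc, ← tpow_outer_submatrix_registerEquiv_symm, Matrix.submatrix_mul_equiv,
    trace_submatrix_equiv]

theorem localA_eq_submatrix_kronecker_one (M : Matrix (Fin N → Fin d) (Fin N → Fin d) ℂ) :
    localA M = (M ⊗ₖ (1 : Matrix (Fin N → Fin d) (Fin N → Fin d) ℂ)).submatrix
      (registerEquiv d N) (registerEquiv d N) :=
  rfl

theorem isTester_localA {M : Matrix (Fin N → Fin d) (Fin N → Fin d) ℂ} (hM : IsTester M) :
    IsTester (localA M) := by
  rw [localA_eq_submatrix_kronecker_one]
  exact isTester_submatrix_equiv (isTester_kronecker_one hM) _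

theorem continuous_acc_applyB (T : Matrix (Fin N → Fin d × Fin d) (Fin N → Fin d × Fin d) ℂ)
    (ψ : Fin d × Fin d → ℂ) :
    Continuous fun U : Matrix.unitaryGroup (Fin d) ℂ => acc T (outer (applyB U ψ)) := by
  simp only [acc_outer_eq_re_trace, coeffMatrix_applyB]
  exact Complex.continuous_re.comp (continuous_trace_mul_outer_vec_tpow_mul _ _)

theorem integral_acc_applyB_mem {K : Set ℝ} (hconv : Convex ℝ K) (hclosed : IsClosed K)
    {T : Matrix (Fin N → Fin d × Fin d) (Fin N → Fin d × Fin d) ℂ} {ψ : Fin d × Fin d → ℂ}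
    (hK : ∀ U ∈ Matrix.unitaryGroup (Fin d) ℂ, acc T (outer (applyB U ψ)) ∈ K) :
    ∫ U : Matrix.unitaryGroup (Fin d) ℂ, acc T (outer (applyB U ψ)) ∂haarUnitary (Fin d) ∈ K :=
  hconv.integral_mem hclosed (.of_forall fun U => hK U U.2)
    ((continuous_acc_applyB T ψ).integrable_of_hasCompactSupport (.of_compactSpace _))

end Registers

theorem stmt_0_general {d N : ℕ} {T : Matrix (Fin N → Fin d × Fin d) (Fin N → Fin d × Fin d) ℂ}
    (hT : IsTester T) :
    ∃ M : Matrix (Fin N → Fin d) (Fin N → Fin d) ℂ,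
      IsTester M ∧ IsTester (localA M) ∧
      ∀ ψ, acc (localA M) (outer ψ) =
        ∫ U : Matrix.unitaryGroup (Fin d) ℂ, acc T (outer (applyB U ψ)) ∂haarUnitary (Fin d) := by
  have hM := isTester_localizedTester (isTester_submatrix_equiv hT (registerEquiv d N).symm)
  refine ⟨_, hM, isTester_localA hM, fun ψ => ?_⟩
  simp only [acc_outer_eq_re_trace, coeffMatrix_applyB, localA_eq_submatrix_kronecker_one,
    Matrix.submatrix_submatrix, Equiv.self_comp_symm, Matrix.submatrix_id_id,
    trace_localizedTester_kronecker_one_mul_outer]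
  exact (integral_re ((continuous_trace_mul_outer_vec_tpow_mul _ _).integrable_of_hasCompactSupport
    (.of_compactSpace _))).symm

/-- Theorem 3.1, optimal local tester:
unitary invariance on `H_B` implies an optimal local tester on `H_A`. -/
theorem stmt_0 (d N : ℕ) (hd : 1 ≤ d) (hN : 1 ≤ N)
    (Pyes Pno : Set (Fin d × Fin d → ℂ))
    (hdisj : Disjoint Pyes Pno)
    (hunit : ∀ ψ ∈ Pyes ∪ Pno, IsUnitVec ψ)
    (hinvyes : ∀ U ∈ Matrix.unitaryGroup (Fin d) ℂ, ∀ ψ ∈ Pyes, applyB U ψ ∈ Pyes)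
    (hinvno : ∀ U ∈ Matrix.unitaryGroup (Fin d) ℂ, ∀ ψ ∈ Pno, applyB U ψ ∈ Pno)
    (c s : ℝ) (hs0 : 0 ≤ s) (hsc : s < c) (hc1 : c ≤ 1)
    (T : Matrix (Fin N → Fin d × Fin d) (Fin N → Fin d × Fin d) ℂ)
    (hT : IsTester T)
    (hyes : ∀ ψ ∈ Pyes, c ≤ acc T (outer ψ))
    (hno : ∀ ψ ∈ Pno, acc T (outer ψ) ≤ s) :
    ∃ M : Matrix (Fin N → Fin d) (Fin N → Fin d) ℂ,
      IsTester M ∧ IsTester (localA M) ∧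
      (∀ ψ ∈ Pyes, c ≤ acc (localA M) (outer ψ)) ∧
      (∀ ψ ∈ Pno, acc (localA M) (outer ψ) ≤ s) := by
  obtain ⟨M, hM, hlocal, acc_eq⟩ := stmt_0_general hT
  refine ⟨M, hM, hlocal, fun ψ hψ => ?_, fun ψ hψ => ?_⟩
  · rw [acc_eq]
    exact integral_acc_applyB_mem (convex_Ici c) isClosed_Ici fun U hU =>
      hyes _ (hinvyes U hU ψ hψ)
  · rw [acc_eq]
    exact integral_acc_applyB_mem (convex_Iic s) isClosed_Iic fun U hU =>
      hno _ (hinvno U hU ψ hψ)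

end PaperStmt
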